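/- arXiv:2102.06472 — 4 statements merged into one kernel-verified Lean document; each statement's English description precedes it below -/
import Mathlib

section
/- Let t0 ≤ T be real numbers, let b > 0, let ρ : [t0, T] → [0, b] be a measurable function, let γ : [t0, T] → [0, ∞) be an integrable function, and let μ : [0, b] → [0, ∞) be a continuous non-decreasing function with μ(s) > 0 for every s ∈ (0, b]. Suppose there exists c ∈ (0, b) such that for all t ∈ [t0, T], ρ(t) ≤ c + ∫_{t0}^{t} γ(s) μ(ρ(s)) ds. Define M(x) := ∫_x^b ds/μ(s) for x ∈ [0, b] (with value +∞ allowed when x = 0). Then for all t ∈ [t0, T], M(c) ≤ M(ρ(t)) + ∫_{t0}^{t} γ(s) ds (as an inequality in the extended reals). -/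
open MeasureTheory Set

/-!
Let `R t = c + ∫ s in t0..t, γ s * μ (ρ s)`. Since `ρ ≤ R` and `μ` is non-decreasing,
`R' ≤ γ * μ(R)` almost everywhere, so `∫ x in c..R t, 1 / μ x`, which is absolutely continuous
in `t` with derivative `R' / μ(R) ≤ γ`, is at most `∫ s in t0..t, γ s`. As `ρ t ≤ R t`, this
bounds `M(c) - M(ρ t)`.

The chain rule must also hold where `R t` is a discontinuity of the integrand `h = 1 / μ`. As `h`
is non-increasing, its primitive `G` is concave and `G y - G x ≤ (y - x) * h x` for all `x` and
`y`. Hence `s ↦ G (R s) - h (R t) * R s` has a maximum at `s = t`, where its derivative therefore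
vanishes for almost every `t`.
-/

lemma absolutelyContinuousOnInterval_comp_of_lipschitzOnWith {X Y : Type*} [PseudoMetricSpace X]
    [PseudoMetricSpace Y] {G : X → Y} {f : ℝ → X} {K : NNReal} {S : Set X} {a b : ℝ}
    (hG : LipschitzOnWith K G S) (hf : AbsolutelyContinuousOnInterval f a b)
    (hfS : MapsTo f (uIcc a b) S) :
    AbsolutelyContinuousOnInterval (G ∘ f) a b := by
  refine squeeze_zero' (.of_forall fun E => Finset.sum_nonneg fun i _ => dist_nonneg) ?_
    (by simpa only [mul_zero] using Filter.Tendsto.const_mul (K : ℝ) hf)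
  filter_upwards [Filter.mem_inf_of_right (Filter.mem_principal_self _)] with E hE
  rw [Finset.mul_sum]
  exact Finset.sum_le_sum fun i hi =>
    hG.dist_le_mul _ (hfS (hE.1 i hi).1) _ (hfS (hE.1 i hi).2)

lemma antitoneOn_one_div_of_monotoneOn {α : Type*} [Preorder α] {ν : α → ℝ} {s : Set α}
    (hν : MonotoneOn ν s) (hν_pos : ∀ x ∈ s, 0 < ν x) : AntitoneOn (fun x => 1 / ν x) s :=
  fun _ hx _ hy hxy => one_div_le_one_div_of_le (hν_pos _ hx) (hν hx hy hxy)

section Antitone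

variable {h R : ℝ → ℝ}

lemma intervalIntegral_le_sub_mul_of_antitone (hh : Antitone h) (x y : ℝ) :
    ∫ s in x..y, h s ≤ (y - x) * h x := by
  rcases le_total x y with hxy | hyx
  · have := intervalIntegral.integral_mono_on hxy hh.intervalIntegrable
      (intervalIntegrable_const (μ := volume) (c := h x)) fun s hs => hh hs.1
    simpa using this
  · have := intervalIntegral.integral_mono_on hyx
      (intervalIntegrable_const (μ := volume) (c := h x)) hh.intervalIntegrable fun s hs => hh hs.2
    rw [intervalIntegral.integral_const, smul_eq_mul] at this
    rw [intervalIntegral.integral_symm]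
    linarith

lemma exists_lipschitzOnWith_intervalIntegral_of_antitone (hh : Antitone h) (c p q : ℝ) :
    ∃ K, LipschitzOnWith K (fun x => ∫ s in c..x, h s) (Icc p q) := by
  refine ⟨(max |h q| |h p|).toNNReal, LipschitzOnWith.of_dist_le' fun x hx y hy => ?_⟩
  rw [dist_eq_norm, dist_eq_norm, intervalIntegral.integral_interval_sub_left
    hh.intervalIntegrable hh.intervalIntegrable]
  refine intervalIntegral.norm_integral_le_of_norm_le_const fun s hs => ?_
  have hs : s ∈ Icc p q := uIcc_subset_Icc hy hx (uIoc_subset_uIcc hs)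
  exact abs_le_max_abs_abs (hh hs.2) (hh hs.1)

lemma absolutelyContinuousOnInterval_intervalIntegral_comp_of_antitone {a b : ℝ}
    (hh : Antitone h) (hR : AbsolutelyContinuousOnInterval R a b) (c : ℝ) :
    AbsolutelyContinuousOnInterval (fun t => ∫ x in c..R t, h x) a b := by
  obtain ⟨C, hC⟩ := hR.exists_bound
  obtain ⟨K, hK⟩ := exists_lipschitzOnWith_intervalIntegral_of_antitone hh c (-C) C
  exact absolutelyContinuousOnInterval_comp_of_lipschitzOnWith hK hR fun t ht => abs_le.1 (hC t ht)

lemma deriv_intervalIntegral_comp_of_antitone {c t : ℝ} (hh : Antitone h)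
    (hR : DifferentiableAt ℝ R t) (hG : DifferentiableAt ℝ (fun t => ∫ x in c..R t, h x) t) :
    deriv (fun t => ∫ x in c..R t, h x) t = h (R t) * deriv R t := by
  have hmax : IsLocalMax (fun s => (∫ x in c..R s, h x) - h (R t) * R s) t := by
    refine Filter.Eventually.of_forall fun s => ?_
    have hsub := intervalIntegral.integral_interval_sub_left
      (hh.intervalIntegrable (μ := volume) (a := c) (b := R s))
      (hh.intervalIntegrable (a := c) (b := R t))
    have hle := intervalIntegral_le_sub_mul_of_antitone hh (R t) (R s)
    simp only
    linarith
  exact sub_eq_zero.1 <|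
    hmax.hasDerivAt_eq_zero (hG.hasDerivAt.sub (hR.hasDerivAt.const_mul (h (R t))))

lemma intervalIntegral_le_of_antitone_mul_deriv_le {γ : ℝ → ℝ} {a b : ℝ} (hab : a ≤ b)
    (hh : Antitone h) (hR : AbsolutelyContinuousOnInterval R a b)
    (hγ : IntervalIntegrable γ volume a b)
    (hle : ∀ᵐ t, t ∈ Icc a b → h (R t) * deriv R t ≤ γ t) :
    ∫ x in R a..R b, h x ≤ ∫ t in a..b, γ t := by
  have hG := absolutelyContinuousOnInterval_intervalIntegral_comp_of_antitone hh hR (R a)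
  calc ∫ x in R a..R b, h x
      = ∫ t in a..b, deriv (fun t => ∫ x in R a..R t, h x) t := by
        simp [hG.integral_deriv_eq_sub]
    _ ≤ ∫ t in a..b, γ t := by
        refine intervalIntegral.integral_mono_ae_restrict hab hG.intervalIntegrable_deriv hγ ?_
        refine (ae_restrict_iff' measurableSet_Icc).2 ?_
        filter_upwards [hle, hR.ae_differentiableAt, hG.ae_differentiableAt] with t hle hRt hGt ht
        rw [uIcc_of_le hab] at hRt hGt
        exact (deriv_intervalIntegral_comp_of_antitone hh (hRt ht) (hGt ht)).trans_le (hle ht)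

end Antitone

lemma integrable_mul_comp_of_monotoneOn {α : Type*} [MeasurableSpace α] {m : Measure α}
    {γ ρ : α → ℝ} {μ : ℝ → ℝ} {a b : ℝ} (hγ : Integrable γ m) (hρ : AEMeasurable ρ m)
    (hρ_mem : ∀ᵐ s ∂m, ρ s ∈ Icc a b) (hμ : MonotoneOn μ (Icc a b)) :
    Integrable (fun s => γ s * μ (ρ s)) m := by
  have hμ_meas : AEMeasurable μ (m.map ρ) := by
    rw [← Measure.restrict_eq_self_of_ae_mem ((ae_map_iff hρ measurableSet_Icc).2 hρ_mem)]
    exact aemeasurable_restrict_of_monotoneOn measurableSet_Icc hμ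
  refine hγ.mul_bdd (c := max |μ a| |μ b|) (hμ_meas.comp_aemeasurable hρ).aestronglyMeasurable ?_
  filter_upwards [hρ_mem] with s hs
  have hab : a ≤ b := hs.1.trans hs.2
  exact abs_le_max_abs_abs (hμ (left_mem_Icc.2 hab) hs hs.1) (hμ hs (right_mem_Icc.2 hab) hs.2)

lemma setLIntegral_Ioc_le_add_ofReal_intervalIntegral {m : Measure ℝ} {f : ℝ → ℝ} {c r : ℝ}
    (b : ℝ) (hcr : c ≤ r) (hf : IntervalIntegrable f m c r) (hf_nonneg : ∀ x ∈ Ioc c r, 0 ≤ f x) :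
    ∫⁻ x in Ioc c b, ENNReal.ofReal (f x) ∂m ≤
      (∫⁻ x in Ioc r b, ENNReal.ofReal (f x) ∂m) + ENNReal.ofReal (∫ x in c..r, f x ∂m) := by
  rw [intervalIntegral.integral_of_le hcr, ofReal_integral_eq_lintegral_ofReal hf.1
    ((ae_restrict_iff' measurableSet_Ioc).2 (.of_forall hf_nonneg)), add_comm]
  exact (lintegral_mono_set Ioc_subset_Ioc_union_Ioc).trans (lintegral_union_le _ _ _)

section Osgood

variable {γ : ℝ → ℝ} {c t0 t : ℝ}

lemma intervalIntegral_one_div_le_of_le_mul_comp_primitive {g ν : ℝ → ℝ} (ht : t0 ≤ t)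
    (hγ : IntervalIntegrable γ volume t0 t) (hg : IntervalIntegrable g volume t0 t)
    (hν : Monotone ν) (hν_pos : ∀ x, 0 < ν x)
    (hle : ∀ s ∈ Icc t0 t, g s ≤ γ s * ν (c + ∫ u in t0..s, g u)) :
    ∫ x in c..c + ∫ u in t0..t, g u, 1 / ν x ≤ ∫ s in t0..t, γ s := by
  set R : ℝ → ℝ := fun s => c + ∫ u in t0..s, g u with hR
  have hR_ac : AbsolutelyContinuousOnInterval R t0 t :=
    (LipschitzWith.const c).lipschitzOnWith.absolutelyContinuousOnInterval.fun_add
      (hg.absolutelyContinuousOnInterval_intervalIntegral left_mem_uIcc)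
  have hanti : Antitone fun x => 1 / ν x :=
    antitoneOn_univ.1 (antitoneOn_one_div_of_monotoneOn (hν.monotoneOn univ) fun x _ => hν_pos x)
  have hderiv : ∀ᵐ s, s ∈ Icc t0 t → 1 / ν (R s) * deriv R s ≤ γ s := by
    filter_upwards [hg.ae_hasDerivAt_integral] with s hs hst
    have hRs : deriv R s = g s :=
      ((hs (Icc_subset_uIcc hst) t0 left_mem_uIcc).const_add c).deriv
    rw [hRs, one_div_mul_eq_div, div_le_iff₀ (hν_pos _)]
    exact hle s hst
  simpa [hR] using intervalIntegral_le_of_antitone_mul_deriv_le ht hanti hR_ac hγ hderiv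

lemma intervalIntegral_one_div_le_of_le_add_intervalIntegral {ρ μ : ℝ → ℝ} {a b : ℝ} (ht : t0 ≤ t)
    (hρ_meas : AEMeasurable ρ (volume.restrict (Icc t0 t)))
    (hρ_mem : ∀ s ∈ Icc t0 t, ρ s ∈ Icc a b)
    (hγ_int : IntegrableOn γ (Icc t0 t)) (hγ_nonneg : ∀ s ∈ Icc t0 t, 0 ≤ γ s)
    (hμ_mono : MonotoneOn μ (Icc a b)) (hac : a ≤ c) (hμc : 0 < μ c) (hcρ : c ≤ ρ t)
    (hineq : ∀ s ∈ Icc t0 t, ρ s ≤ c + ∫ u in t0..s, γ u * μ (ρ u)) :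
    ∫ x in c..ρ t, 1 / μ x ≤ ∫ s in t0..t, γ s := by
  have ht_mem : t ∈ Icc t0 t := right_mem_Icc.2 ht
  have hρb : ρ t ≤ b := (hρ_mem t ht_mem).2
  have hcb : c ≤ b := hcρ.trans hρb
  have hproj : ∀ x, (projIcc c b hcb x : ℝ) ∈ Icc a b := fun x =>
    Icc_subset_Icc_left hac (projIcc c b hcb x).2
  -- The right-hand side of `hineq` may exceed `b`, so `μ` is extended by constants.
  set ν : ℝ → ℝ := fun x => μ (projIcc c b hcb x) with hν
  have hν_mono : Monotone ν := fun x y hxy =>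
    hμ_mono (hproj x) (hproj y) (monotone_projIcc hcb hxy)
  have hν_pos : ∀ x, 0 < ν x := fun x =>
    hμc.trans_le (hμ_mono ⟨hac, hcb⟩ (hproj x) (projIcc c b hcb x).2.1)
  have hμν : ∀ s ∈ Icc t0 t, ∀ y, ρ s ≤ y → μ (ρ s) ≤ ν y := fun s hs y hy =>
    hμ_mono (hρ_mem s hs) (hproj y) (by simp [coe_projIcc, (hρ_mem s hs).2, hy])
  have hg_int : IntegrableOn (fun s => γ s * μ (ρ s)) (Icc t0 t) :=
    integrable_mul_comp_of_monotoneOn hγ_int hρ_meas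
      ((ae_restrict_iff' measurableSet_Icc).2 (.of_forall hρ_mem)) hμ_mono
  have hν_int : IntervalIntegrable (fun x => 1 / ν x) volume c (c + ∫ s in t0..t, γ s * μ (ρ s)) :=
    (antitoneOn_one_div_of_monotoneOn (hν_mono.monotoneOn _) fun x _ => hν_pos x).intervalIntegrable
  calc ∫ x in c..ρ t, 1 / μ x
      = ∫ x in c..ρ t, 1 / ν x := by
        refine intervalIntegral.integral_congr fun x hx => ?_
        rw [uIcc_of_le hcρ] at hx
        simp only [hν, projIcc_of_mem hcb (Icc_subset_Icc_right hρb hx)]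
    _ ≤ ∫ x in c..c + ∫ s in t0..t, γ s * μ (ρ s), 1 / ν x :=
        intervalIntegral.integral_mono_interval le_rfl hcρ (hineq t ht_mem)
          (.of_forall fun x => (one_div_pos.2 (hν_pos x)).le) hν_int
    _ ≤ ∫ s in t0..t, γ s :=
        intervalIntegral_one_div_le_of_le_mul_comp_primitive ht
          ((intervalIntegrable_iff_integrableOn_Icc_of_le ht).2 hγ_int)
          ((intervalIntegrable_iff_integrableOn_Icc_of_le ht).2 hg_int) hν_mono hν_pos
          fun s hs => mul_le_mul_of_nonneg_left (hμν s hs _ (hineq s hs)) (hγ_nonneg s hs)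

end Osgood

theorem osgood_lemma_general {t0 T a b c : ℝ} {ρ γ μ : ℝ → ℝ}
    (hρ_meas : AEMeasurable ρ (volume.restrict (Icc t0 T)))
    (hρ_mem : ∀ t ∈ Icc t0 T, ρ t ∈ Icc a b)
    (hγ_int : IntegrableOn γ (Icc t0 T))
    (hγ_nonneg : ∀ s ∈ Icc t0 T, 0 ≤ γ s)
    (hμ_mono : MonotoneOn μ (Icc a b))
    (hμ_pos : ∀ s ∈ Ioc a b, 0 < μ s)
    (hc : c ∈ Ioc a b)
    (hineq : ∀ t ∈ Icc t0 T, ρ t ≤ c + ∫ s in t0..t, γ s * μ (ρ s)) :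
    ∀ t ∈ Icc t0 T,
      (∫⁻ s in Ioc c b, ENNReal.ofReal (1 / μ s)) ≤
        (∫⁻ s in Ioc (ρ t) b, ENNReal.ofReal (1 / μ s)) +
          ENNReal.ofReal (∫ s in t0..t, γ s) := by
  intro t ht
  have hsub : Icc t0 t ⊆ Icc t0 T := Icc_subset_Icc_right ht.2
  rcases le_total (ρ t) c with hρc | hcρ
  · exact (lintegral_mono_set (Ioc_subset_Ioc_left hρc)).trans le_self_add
  have hcρ_sub : Icc c (ρ t) ⊆ Ioc a b := Icc_subset_Ioc hc.1 (hρ_mem t ht).2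
  have hpos : ∀ x ∈ Icc c (ρ t), 0 < μ x := fun x hx => hμ_pos x (hcρ_sub hx)
  have hanti : AntitoneOn (fun x => 1 / μ x) (uIcc c (ρ t)) := by
    rw [uIcc_of_le hcρ]
    exact antitoneOn_one_div_of_monotoneOn
      (hμ_mono.mono (hcρ_sub.trans Ioc_subset_Icc_self)) hpos
  refine (setLIntegral_Ioc_le_add_ofReal_intervalIntegral b hcρ hanti.intervalIntegrable
    fun x hx => (one_div_pos.2 (hpos x (Ioc_subset_Icc_self hx))).le).trans ?_
  gcongr
  exact intervalIntegral_one_div_le_of_le_add_intervalIntegral ht.1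
    (hρ_meas.mono_measure (Measure.restrict_mono_set volume hsub)) (fun s hs => hρ_mem s (hsub hs))
    (hγ_int.mono_set hsub) (fun s hs => hγ_nonneg s (hsub hs)) hμ_mono hc.1.le (hμ_pos c hc) hcρ
    fun s hs => hineq s (hsub hs)

/-- Osgood's lemma. -/
theorem osgood_lemma
    (t0 T b : ℝ) (ht0T : t0 ≤ T) (hb : 0 < b)
    (ρ γ μ : ℝ → ℝ)
    (hρ_meas : Measurable ρ)
    (hρ_mem : ∀ t ∈ Icc t0 T, ρ t ∈ Icc 0 b)
    (hγ_int : IntegrableOn γ (Icc t0 T))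
    (hγ_nonneg : ∀ s ∈ Icc t0 T, 0 ≤ γ s)
    (hμ_cont : ContinuousOn μ (Icc 0 b))
    (hμ_mono : MonotoneOn μ (Icc 0 b))
    (hμ_nonneg : ∀ s ∈ Icc 0 b, 0 ≤ μ s)
    (hμ_pos : ∀ s ∈ Ioc 0 b, 0 < μ s)
    (c : ℝ) (hc : c ∈ Ioo 0 b)
    (hineq : ∀ t ∈ Icc t0 T, ρ t ≤ c + ∫ s in t0..t, γ s * μ (ρ s)) :
    ∀ t ∈ Icc t0 T,
      (∫⁻ s in Ioc c b, ENNReal.ofReal (1 / μ s)) ≤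
        (∫⁻ s in Ioc (ρ t) b, ENNReal.ofReal (1 / μ s)) +
          ENNReal.ofReal (∫ s in t0..t, γ s) := by
  exact osgood_lemma_general hρ_meas.aemeasurable hρ_mem hγ_int hγ_nonneg hμ_mono hμ_pos
    (Ioo_subset_Ioc_self hc) hineq
end

section
/- Let T > 0, let x : [0, T] → ℝ be a bounded function that is right-continuous at every point and admits a left limit at every point of (0, T], and let x_n : [0, T] → ℝ (n ∈ ℕ) be measurable functions. Let (λ_n)_n be a sequence of time-changes on [0, T] such that both sup_{0≤t≤T} |x_n(t) − x(λ_n(t))| and sup_{0≤t≤T} |t − λ_n(t)| vanish as n → ∞. Then sup_{0≤t≤T} | ∫_0^t x_n(s) ds − ∫_0^{λ_n(t)} x(s) ds | → 0 as n → ∞. -/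
open Set MeasureTheory

/-!
Since `X i - x ∘ l i → 0` and `l i t → t`, the functions `X i` converge to `x` at every continuity
point of `x`, hence almost everywhere, and by dominated convergence in `L¹`. Convergence in `L¹`
makes the primitives of `X i` converge uniformly to the primitive of `x`. That primitive is
uniformly continuous on a compact interval, so composing it with `l i` changes it by a uniformly
small amount.
-/

open Filter Topology Uniformity
open scoped Interval

lemma tendstoUniformlyOn_atTop_iff_dist_le {ι α β : Type*} [Nonempty ι] [Preorder ι]
    [IsDirectedOrder ι] [PseudoMetricSpace β] {F : ι → α → β} {f : α → β} {s : Set α} :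
    TendstoUniformlyOn F f atTop s ↔
      ∀ ε > 0, ∃ N, ∀ n ≥ N, ∀ t ∈ s, dist (f t) (F n t) ≤ ε :=
  (atTop_basis.tendstoUniformlyOn_iff Metric.uniformity_basis_dist_le).trans (by simp)

section RightContinuous

variable {α β : Type*} [TopologicalSpace α] [LinearOrder α] [OrderTopology α]
  [SecondCountableTopology α] [UniformSpace β] {f : α → β} {s : Set α}

lemma countable_setOf_not_eventually_mem_of_continuousWithinAt_Ioi
    (hf : ∀ t ∈ s, ContinuousWithinAt f (Ioi t) t) {U : Set (β × β)} (hU : U ∈ 𝓤 β) :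
    {t ∈ s | ¬ ∀ᶠ z in 𝓝 t, (f t, f z) ∈ U}.Countable := by
  set D := {t ∈ s | ¬ ∀ᶠ z in 𝓝 t, (f t, f z) ∈ U}
  obtain ⟨V, hV, hV_symm, hVU⟩ := comp_symm_of_uniformity hU
  -- Just to the right of a point of `D`, `f` is constant up to `V`, so `D` has no points there.
  refine (countable_setOfPred_isolated_right_within (s := D)).mono ?_
  intro t ht
  refine ⟨ht, ?_⟩
  have hV_right : ∀ᶠ y in 𝓝[>] t, (f t, f y) ∈ V :=
    hf t ht.1 (UniformSpace.ball_mem_nhds (f t) hV)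
  have h_notMem : ∀ᶠ y in 𝓝[>] t, y ∉ D := by
    filter_upwards [hV_right, eventually_eventually_nhdsWithin.2 hV_right, self_mem_nhdsWithin]
      with y hty hV_near hy hyD
    rw [isOpen_Ioi.nhdsWithin_eq hy] at hV_near
    exact hyD.2 <| hV_near.mono fun z htz ↦ hVU <| SetRel.prodMk_mem_comp (hV_symm hty) htz
  have h_false : ∀ᶠ _ in 𝓝[D ∩ Ioi t] t, False := by
    filter_upwards [self_mem_nhdsWithin, nhdsWithin_mono t inter_subset_right h_notMem]
      with y hy hyD using hyD hy.1
  exact eventually_false_iff_eq_bot.1 h_false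

lemma countable_setOf_not_continuousAt_of_continuousWithinAt_Ioi [(𝓤 β).IsCountablyGenerated]
    (hf : ∀ t ∈ s, ContinuousWithinAt f (Ioi t) t) :
    {t ∈ s | ¬ ContinuousAt f t}.Countable := by
  obtain ⟨U, hU⟩ := (𝓤 β).exists_antitone_basis
  refine (countable_iUnion fun k ↦
    countable_setOf_not_eventually_mem_of_continuousWithinAt_Ioi hf (hU.mem k)).mono ?_
  rintro t ⟨hts, ht⟩
  simpa [Uniform.continuousAt_iff'_right, hU.1.tendsto_right_iff, hts] using ht

lemma ae_restrict_continuousAt_of_continuousWithinAt_Ioi [(𝓤 β).IsCountablyGenerated]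
    [MeasurableSpace α] {μ : Measure α} [NullSingletonClass μ] (hs : MeasurableSet s)
    (hf : ∀ t ∈ s, ContinuousWithinAt f (Ioi t) t) :
    ∀ᵐ t ∂μ.restrict s, ContinuousAt f t := by
  filter_upwards [(countable_setOf_not_continuousAt_of_continuousWithinAt_Ioi hf).ae_notMem _,
    ae_restrict_mem hs] with t ht hts
  exact not_not.1 fun h ↦ ht ⟨hts, h⟩

end RightContinuous

section AEContinuous

variable {α : Type*} [TopologicalSpace α] [MeasurableSpace α] [OpensMeasurableSpace α]
  {μ : Measure α} {s : Set α}

lemma aestronglyMeasurable_restrict_of_ae_continuousWithinAt {β : Type*} [TopologicalSpace β]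
    [TopologicalSpace.PseudoMetrizableSpace β] [SecondCountableTopologyEither α β] {f : α → β}
    (hs : MeasurableSet s) (hf : ∀ᵐ t ∂μ.restrict s, ContinuousWithinAt f s t) :
    AEStronglyMeasurable f (μ.restrict s) := by
  obtain ⟨c, hc, hc_meas, hfc⟩ := hf.exists_measurable_mem
  have hfc_cont : ContinuousOn f (c ∩ s) := fun t ht ↦ (hfc t ht.1).mono inter_subset_right
  rw [← Measure.restrict_eq_self_of_ae_mem hc, Measure.restrict_restrict hc_meas]
  exact hfc_cont.aestronglyMeasurable (hc_meas.inter hs)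

lemma integrableOn_of_bounded_of_ae_continuousWithinAt {E : Type*} [NormedAddCommGroup E]
    [SecondCountableTopologyEither α E] {f : α → E} {M : ℝ} (hs : MeasurableSet s)
    (hμs : μ s ≠ ⊤) (hM : ∀ t ∈ s, ‖f t‖ ≤ M)
    (hf : ∀ᵐ t ∂μ.restrict s, ContinuousWithinAt f s t) :
    IntegrableOn f s μ :=
  .of_bound hμs.lt_top (aestronglyMeasurable_restrict_of_ae_continuousWithinAt hs hf) M
    ((ae_restrict_mem hs).mono hM)

end AEContinuous

section Primitive

variable {ι E : Type*} [NormedAddCommGroup E] [NormedSpace ℝ E] {p : Filter ι}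
  {F : ι → ℝ → E} {f : ℝ → E} {a b : ℝ} {μ : Measure ℝ}

lemma tendstoUniformlyOn_primitive_of_tendsto_integral_norm_sub
    (hF : ∀ᶠ i in p, IntervalIntegrable (F i) μ a b) (hf : IntervalIntegrable f μ a b)
    (h : Tendsto (fun i ↦ ∫ s in Ι a b, ‖F i s - f s‖ ∂μ) p (𝓝 0)) :
    TendstoUniformlyOn (fun i t ↦ ∫ s in a..t, F i s ∂μ) (fun t ↦ ∫ s in a..t, f s ∂μ) p
      [[a, b]] := by
  rw [Metric.tendstoUniformlyOn_iff]
  intro ε hε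
  filter_upwards [hF, h.eventually_lt_const hε] with i hFi hiε t ht
  have h_sub : [[a, t]] ⊆ [[a, b]] := uIcc_subset_uIcc_left ht
  calc
    dist (∫ s in a..t, f s ∂μ) (∫ s in a..t, F i s ∂μ)
      = ‖∫ s in a..t, (F i s - f s) ∂μ‖ := by
        rw [dist_comm, dist_eq_norm,
          intervalIntegral.integral_sub (hFi.mono_set h_sub) (hf.mono_set h_sub)]
    _ ≤ ∫ s in Ι a t, ‖F i s - f s‖ ∂μ :=
        intervalIntegral.norm_integral_le_integral_norm_uIoc
    _ ≤ ∫ s in Ι a b, ‖F i s - f s‖ ∂μ :=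
        setIntegral_mono_set (hFi.sub hf).norm.def' (.of_forall fun _ ↦ norm_nonneg _)
          (uIoc_subset_uIoc_of_uIcc_subset_uIcc h_sub).eventuallyLE
    _ < ε := hiε

lemma tendstoUniformlyOn_primitive_of_dominated_convergence [p.IsCountablyGenerated]
    (bound : ℝ → ℝ) (hF_meas : ∀ᶠ i in p, AEStronglyMeasurable (F i) (μ.restrict (Ι a b)))
    (h_bound : ∀ᶠ i in p, ∀ᵐ s ∂μ.restrict (Ι a b), ‖F i s‖ ≤ bound s)
    (bound_integrable : IntervalIntegrable bound μ a b) (hf : IntervalIntegrable f μ a b)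
    (h_lim : ∀ᵐ s ∂μ.restrict (Ι a b), Tendsto (F · s) p (𝓝 (f s))) :
    TendstoUniformlyOn (fun i t ↦ ∫ s in a..t, F i s ∂μ) (fun t ↦ ∫ s in a..t, f s ∂μ) p
      [[a, b]] := by
  rw [intervalIntegrable_iff] at bound_integrable
  have hF : ∀ᶠ i in p, IntervalIntegrable (F i) μ a b := by
    filter_upwards [hF_meas, h_bound] with i hi_meas hi_bound
    exact intervalIntegrable_iff.2 (bound_integrable.mono' hi_meas hi_bound)
  refine tendstoUniformlyOn_primitive_of_tendsto_integral_norm_sub hF hf ?_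
  rw [← integral_zero ℝ ℝ (μ := μ.restrict (Ι a b))]
  refine tendsto_integral_filter_of_dominated_convergence (fun s ↦ bound s + ‖f s‖)
    (hF.mono fun i hi ↦ (hi.sub hf).def'.aestronglyMeasurable.norm) ?_
    (bound_integrable.add hf.def'.norm) ?_
  · filter_upwards [h_bound] with i hi
    filter_upwards [hi] with s hs
    rw [norm_norm]
    exact (norm_sub_le _ _).trans (add_le_add_left hs _)
  · filter_upwards [h_lim] with s hs
    exact tendsto_iff_norm_sub_tendsto_zero.1 hs

lemma tendstoUniformlyOn_primitive_comp [NullSingletonClass μ] {l : ι → ℝ → ℝ}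
    (hf : IntervalIntegrable f μ a b) (hl_maps : ∀ᶠ i in p, MapsTo (l i) [[a, b]] [[a, b]])
    (hl : TendstoUniformlyOn l id p [[a, b]]) :
    TendstoUniformlyOn (fun i t ↦ ∫ s in a..l i t, f s ∂μ) (fun t ↦ ∫ s in a..t, f s ∂μ) p
      [[a, b]] := by
  have h_cont := intervalIntegral.continuousOn_primitive_interval' hf left_mem_uIcc
  rw [tendstoUniformlyOn_iff_tendstoUniformly_comp_coe] at hl ⊢
  exact (isCompact_uIcc.uniformContinuousOn_of_continuous h_cont).comp_tendstoUniformly_eventually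
    (hl_maps.mono fun i hi t ↦ hi t.2) Subtype.prop hl

end Primitive

section TimeChange

variable {ι α E : Type*} [NormedAddCommGroup E] {p : Filter ι} {x : α → E} {X : ι → α → E}
  {l : ι → α → α} {s : Set α}

lemma eventually_norm_le_of_tendstoUniformlyOn_sub_comp {M M' : ℝ} (hMM' : M < M')
    (hM : ∀ t ∈ s, ‖x t‖ ≤ M) (hl_maps : ∀ᶠ i in p, MapsTo (l i) s s)
    (hX : TendstoUniformlyOn (fun i t ↦ X i t - x (l i t)) 0 p s) :
    ∀ᶠ i in p, ∀ t ∈ s, ‖X i t‖ ≤ M' := by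
  filter_upwards [Metric.tendstoUniformlyOn_iff.1 hX (M' - M) (sub_pos.2 hMM'), hl_maps]
    with i hi hi_maps t ht
  have h_close : ‖X i t - x (l i t)‖ < M' - M := by
    simpa [dist_eq_norm'] using hi t ht
  calc
    ‖X i t‖ ≤ ‖x (l i t)‖ + ‖X i t - x (l i t)‖ := norm_le_norm_add_norm_sub' _ _
    _ ≤ M + (M' - M) := add_le_add (hM _ (hi_maps ht)) h_close.le
    _ = M' := add_sub_cancel _ _

lemma tendsto_of_tendstoUniformlyOn_sub_comp [UniformSpace α] {t : α} (ht : t ∈ s)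
    (hx : ContinuousWithinAt x s t) (hl_maps : ∀ᶠ i in p, MapsTo (l i) s s)
    (hX : TendstoUniformlyOn (fun i t ↦ X i t - x (l i t)) 0 p s)
    (hl : TendstoUniformlyOn l id p s) :
    Tendsto (X · t) p (𝓝 (x t)) := by
  have hl_t : Tendsto (l · t) p (𝓝[s] t) :=
    tendsto_nhdsWithin_iff.2 ⟨hl.tendsto_at ht, hl_maps.mono fun i hi ↦ hi ht⟩
  simpa using (hX.tendsto_at ht).add (hx.tendsto.comp hl_t)

end TimeChange

theorem integral_skorohod_convergence_general {ι E : Type*} [NormedAddCommGroup E]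
    [NormedSpace ℝ E] {p : Filter ι} [p.IsCountablyGenerated] {μ : Measure ℝ}
    [IsFiniteMeasureOnCompacts μ] [NullSingletonClass μ] {a b M : ℝ} {x : ℝ → E} {X : ι → ℝ → E}
    {l : ι → ℝ → ℝ} (hM : ∀ t ∈ [[a, b]], ‖x t‖ ≤ M)
    (hx : ∀ᵐ t ∂μ.restrict [[a, b]], ContinuousWithinAt x [[a, b]] t)
    (hX_meas : ∀ᶠ i in p, AEStronglyMeasurable (X i) (μ.restrict [[a, b]]))
    (hl_maps : ∀ᶠ i in p, MapsTo (l i) [[a, b]] [[a, b]])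
    (hX : TendstoUniformlyOn (fun i t ↦ X i t - x (l i t)) 0 p [[a, b]])
    (hl : TendstoUniformlyOn l id p [[a, b]]) :
    TendstoUniformlyOn (fun i t ↦ (∫ s in a..t, X i s ∂μ) - ∫ s in a..l i t, x s ∂μ) 0 p
      [[a, b]] := by
  have hx_int : IntervalIntegrable x μ a b :=
    (integrableOn_of_bounded_of_ae_continuousWithinAt measurableSet_uIcc
      isCompact_uIcc.measure_ne_top hM hx).intervalIntegrable
  have h_mono : μ.restrict (Ι a b) ≤ μ.restrict [[a, b]] :=
    Measure.restrict_mono uIoc_subset_uIcc le_rfl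
  have h_bound : ∀ᶠ i in p, ∀ᵐ s ∂μ.restrict (Ι a b), ‖X i s‖ ≤ M + 1 :=
    (eventually_norm_le_of_tendstoUniformlyOn_sub_comp (lt_add_one M) hM hl_maps hX).mono
      fun i hi ↦ ae_mono h_mono ((ae_restrict_mem measurableSet_uIcc).mono hi)
  have h_lim : ∀ᵐ s ∂μ.restrict (Ι a b), Tendsto (X · s) p (𝓝 (x s)) := by
    refine ae_mono h_mono ?_
    filter_upwards [hx, ae_restrict_mem measurableSet_uIcc] with s hxs hs
    exact tendsto_of_tendstoUniformlyOn_sub_comp hs hxs hl_maps hX hl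
  have h_primitive := tendstoUniformlyOn_primitive_of_dominated_convergence (fun _ ↦ M + 1)
    (hX_meas.mono fun i hi ↦ hi.mono_measure h_mono) h_bound intervalIntegrable_const hx_int h_lim
  simpa [Pi.sub_def, Pi.zero_def] using
    h_primitive.sub (tendstoUniformlyOn_primitive_comp hx_int hl_maps hl)

theorem integral_skorohod_convergence (T : ℝ) (hT : 0 < T)
    (x : ℝ → ℝ) (xn : ℕ → ℝ → ℝ) (l : ℕ → ℝ → ℝ)
    (hx_bdd : ∃ M : ℝ, ∀ t ∈ Icc (0 : ℝ) T, |x t| ≤ M)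
    (hx_right : ∀ t ∈ Icc (0 : ℝ) T, ContinuousWithinAt x (Ici t) t)
    (hx_left : ∀ t ∈ Ioc (0 : ℝ) T, ∃ L : ℝ,
      Filter.Tendsto x (nhdsWithin t (Iio t)) (nhds L))
    (hxn_meas : ∀ n, Measurable (xn n))
    (hl_cont : ∀ n, ContinuousOn (l n) (Icc (0 : ℝ) T))
    (hl_mono : ∀ n, StrictMonoOn (l n) (Icc (0 : ℝ) T))
    (hl_maps : ∀ n, MapsTo (l n) (Icc (0 : ℝ) T) (Icc (0 : ℝ) T))
    (hl0 : ∀ n, l n 0 = 0) (hlT : ∀ n, l n T = T)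
    (hxconv : ∀ ε > (0 : ℝ), ∃ N, ∀ n ≥ N, ∀ t ∈ Icc (0 : ℝ) T, |xn n t - x (l n t)| ≤ ε)
    (hlconv : ∀ ε > (0 : ℝ), ∃ N, ∀ n ≥ N, ∀ t ∈ Icc (0 : ℝ) T, |t - l n t| ≤ ε) :
    ∀ ε > (0 : ℝ), ∃ N, ∀ n ≥ N, ∀ t ∈ Icc (0 : ℝ) T,
      |(∫ s in (0 : ℝ)..t, xn n s) - ∫ s in (0 : ℝ)..(l n t), x s| ≤ ε := by
  obtain ⟨M, hM⟩ := hx_bdd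
  have hx_cont : ∀ᵐ t ∂volume.restrict (Icc 0 T), ContinuousAt x t :=
    ae_restrict_continuousAt_of_continuousWithinAt_Ioi measurableSet_Icc
      fun t ht ↦ (hx_right t ht).mono Ioi_subset_Ici_self
  rw [← uIcc_of_le hT.le] at hM hx_cont hl_maps hxconv hlconv ⊢
  have h_main := integral_skorohod_convergence_general hM
    (hx_cont.mono fun t ht ↦ ht.continuousWithinAt)
    (.of_forall fun n ↦ (hxn_meas n).aestronglyMeasurable) (.of_forall hl_maps)
    (tendstoUniformlyOn_atTop_iff_dist_le.2 <| by simpa [dist_eq_norm'] using hxconv)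
    (tendstoUniformlyOn_atTop_iff_dist_le.2 <| by simpa [Real.dist_eq] using hlconv)
  simpa [dist_eq_norm'] using tendstoUniformlyOn_atTop_iff_dist_le.1 h_main
end

section
/- Let T > 0, K > 0, and let v : [0, T] → ℝ be a measurable function with 0 ≤ v(t) ≤ e^{−2} for all t ∈ [0, T]. Suppose that for all t ∈ [0, T], v(t) ≤ −K ∫_0^t v(s) ln v(s) ds, where the integrand s ↦ −v(s) ln v(s) is taken to be 0 whenever v(s) = 0. Then v(t) = 0 for all t ∈ [0, T]. -/
open Set MeasureTheory

open Real Filter Topology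

/-!
Osgood's comparison functions for `y' = K * negMulLog y` are `y t = exp (-L t)`, where
`L t = c * exp (-K * (t - a))`. By concavity `negMulLog x ≤ L * x + exp (-L)` for every `L`, so
along `L t` the logarithmic inequality becomes a linear one, and Grönwall's inequality bounds `v t`
by `K * (t - a) * exp (-L t)`. The estimate holds on the whole interval for every `c ≥ 0`, and its
right-hand side tends to `0` as `c → ∞`.
-/

theorem intervalIntegrable_comp_of_mem_isCompact {X E : Type*} [TopologicalSpace X]
    [NormedAddCommGroup E] {μ : Measure ℝ} [IsLocallyFiniteMeasure μ] {g : X → E} {v : ℝ → X}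
    {k : Set X} {a b : ℝ} (hg : Continuous g) (hk : IsCompact k)
    (hv : AEStronglyMeasurable v (μ.restrict (uIoc a b))) (hvk : ∀ t ∈ uIoc a b, v t ∈ k) :
    IntervalIntegrable (fun t ↦ g (v t)) μ a b := by
  obtain ⟨M, hM⟩ := hk.exists_bound_of_continuousOn hg.continuousOn
  rw [intervalIntegrable_iff]
  exact .of_bound measure_Ioc_lt_top (hg.comp_aestronglyMeasurable hv) M
    (ae_restrict_of_forall_mem measurableSet_uIoc fun t ht ↦ hM _ (hvk t ht))

theorem negMulLog_le_mul_add_exp_neg {x : ℝ} (hx : 0 ≤ x) (L : ℝ) :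
    negMulLog x ≤ L * x + exp (-L) := by
  have hscale : negMulLog (exp L * x) = exp L * (negMulLog x - L * x) := by
    rw [negMulLog_mul, negMulLog, log_exp]
    ring
  have hle_one : exp L * (negMulLog x - L * x) ≤ 1 := by
    rw [← hscale]
    exact (negMulLog_le_one_sub_self (by positivity)).trans (sub_le_self _ (by positivity))
  rw [← sub_le_iff_le_add', exp_neg, ← one_div, le_div_iff₀' (exp_pos L)]
  exact hle_one

theorem le_mul_exp_add_integral_exp_of_le_integral {f g β B : ℝ → ℝ} {a b δ : ℝ}
    (hf : ContinuousOn f (Icc a b)) (hg : ContinuousOn g (Icc a b))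
    (hβ : ContinuousOn β (Icc a b)) (hβ_nonneg : ∀ t ∈ Ioo a b, 0 ≤ β t)
    (hB : ContinuousOn B (Icc a b)) (hB' : ∀ t ∈ Ioo a b, HasDerivAt B (β t) t)
    (hle : ∀ t ∈ Icc a b, f t ≤ δ + ∫ s in a..t, (β s * f s + g s)) (hab : a ≤ b) :
    f b ≤ δ * exp (B b - B a) + ∫ s in a..b, exp (B b - B s) * g s := by
  set h : ℝ → ℝ := fun s ↦ β s * f s + g s
  set F : ℝ → ℝ := fun t ↦ δ + ∫ s in a..t, h s
  have hh : ContinuousOn h (Icc a b) := (hβ.mul hf).add hg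
  have hF : ContinuousOn F (Icc a b) := by
    rw [← uIcc_of_le hab] at hh ⊢
    exact continuousOn_const.add
      (intervalIntegral.continuousOn_primitive_interval hh.integrableOn_uIcc)
  have hF' : ∀ t ∈ Ioo a b, HasDerivAt F (h t) t := fun t ht ↦
    (intervalIntegral.integral_hasDerivAt_right
      ((hh.mono (Icc_subset_Icc_right ht.2.le)).intervalIntegrable_of_Icc ht.1.le)
      ((hh.mono Ioo_subset_Icc_self).stronglyMeasurableAtFilter isOpen_Ioo t ht)
      (hh.continuousAt (Icc_mem_nhds ht.1 ht.2))).const_add δ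
  have hexp : ContinuousOn (fun t ↦ exp (B b - B t)) (Icc a b) := (continuousOn_const.sub hB).rexp
  have hderiv_le : ∀ t ∈ Ioo a b,
      exp (B b - B t) * -β t * F t + exp (B b - B t) * h t ≤ exp (B b - B t) * g t := by
    intro t ht
    have hfF : 0 ≤ F t - f t := sub_nonneg.2 (hle t (Ioo_subset_Icc_self ht))
    calc exp (B b - B t) * -β t * F t + exp (B b - B t) * h t
        = exp (B b - B t) * g t - exp (B b - B t) * (β t * (F t - f t)) := by
          simp only [h]; ring
      _ ≤ exp (B b - B t) * g t :=
          sub_le_self _ (mul_nonneg (exp_pos _).le (mul_nonneg (hβ_nonneg t ht) hfF))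
  have hgrowth := intervalIntegral.sub_le_integral_of_hasDeriv_right_of_le hab (hexp.mul hF)
    (fun t ht ↦ (((hB' t ht).const_sub (B b)).exp.mul (hF' t ht)).hasDerivWithinAt)
    (hexp.mul hg).integrableOn_Icc hderiv_le
  have hFa : F a = δ := by simp [F]
  simp only [Pi.mul_apply, sub_self, exp_zero, one_mul, hFa] at hgrowth
  linarith [hle b (right_mem_Icc.2 hab)]

theorem le_mul_exp_neg_of_le_integral_negMulLog {v : ℝ → ℝ} {a b K c : ℝ} (hK : 0 ≤ K)
    (hc : 0 ≤ c) (hab : a ≤ b) (hv : ∀ t ∈ Icc a b, 0 ≤ v t)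
    (hint : IntervalIntegrable (fun s ↦ negMulLog (v s)) volume a b)
    (hle : ∀ t ∈ Icc a b, v t ≤ K * ∫ s in a..t, negMulLog (v s)) :
    v b ≤ K * ((b - a) * exp (-(c * exp (-(K * (b - a)))))) := by
  set V : ℝ → ℝ := fun t ↦ ∫ s in a..t, negMulLog (v s)
  set L : ℝ → ℝ := fun t ↦ c * exp (-(K * (t - a)))
  have hL_nonneg : ∀ t, 0 ≤ L t := fun t ↦ by positivity
  have hL_cont : Continuous L := by fun_prop
  have hL' : ∀ t, HasDerivAt (fun s ↦ -L s) (K * L t) t := by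
    intro t
    have hexponent : HasDerivAt (fun s ↦ -(K * (s - a))) (-K) t := by
      simpa using ((hasDerivAt_id t).sub_const a).const_mul (-K)
    exact (hexponent.exp.const_mul c).neg.congr_deriv (by simp only [L]; ring)
  have hV : ContinuousOn V (Icc a b) := by
    rw [← uIcc_of_le hab]
    exact intervalIntegral.continuousOn_primitive_interval' hint left_mem_uIcc
  have hpointwise : ∀ s ∈ Icc a b, negMulLog (v s) ≤ K * L s * V s + exp (-L s) := fun s hs ↦
    calc negMulLog (v s) ≤ L s * v s + exp (-L s) := negMulLog_le_mul_add_exp_neg (hv s hs) _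
      _ ≤ L s * (K * V s) + exp (-L s) := by gcongr; exact hle s hs
      _ = K * L s * V s + exp (-L s) := by ring
  have hV_le : ∀ t ∈ Icc a b, V t ≤ 0 + ∫ s in a..t, (K * L s * V s + exp (-L s)) := by
    intro t ht
    have hsub : Icc a t ⊆ Icc a b := Icc_subset_Icc_right ht.2
    rw [zero_add]
    refine intervalIntegral.integral_mono_on ht.1 (hint.mono_set ?_)
      (ContinuousOn.intervalIntegrable_of_Icc ht.1 ?_) fun s hs ↦ hpointwise s (hsub hs)
    · rwa [uIcc_of_le ht.1, uIcc_of_le hab]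
    · exact ((by fun_prop : Continuous fun s ↦ K * L s).continuousOn.mul (hV.mono hsub)).add
        (by fun_prop)
  have hVb := le_mul_exp_add_integral_exp_of_le_integral hV (by fun_prop) (by fun_prop)
    (fun t _ ↦ mul_nonneg hK (hL_nonneg t)) (by fun_prop) (fun t _ ↦ hL' t) hV_le hab
  simp only [← exp_add, sub_add_cancel, zero_mul, zero_add, intervalIntegral.integral_const,
    smul_eq_mul] at hVb
  exact (hle b (right_mem_Icc.2 hab)).trans (mul_le_mul_of_nonneg_left hVb hK)

theorem log_gronwall_zero_general {v : ℝ → ℝ} {a b K : ℝ} (hK : 0 ≤ K)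
    (hv : ∀ t ∈ Icc a b, 0 ≤ v t)
    (hint : IntervalIntegrable (fun s ↦ negMulLog (v s)) volume a b)
    (hle : ∀ t ∈ Icc a b, v t ≤ K * ∫ s in a..t, negMulLog (v s)) :
    ∀ t ∈ Icc a b, v t = 0 := by
  intro t ht
  have hsub : Icc a t ⊆ Icc a b := Icc_subset_Icc_right ht.2
  have hint_t : IntervalIntegrable (fun s ↦ negMulLog (v s)) volume a t :=
    hint.mono_set (by rwa [uIcc_of_le ht.1, uIcc_of_le (ht.1.trans ht.2)])
  have hbound : ∀ᶠ c in atTop, v t ≤ K * ((t - a) * exp (-(c * exp (-(K * (t - a)))))) := by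
    filter_upwards [eventually_ge_atTop 0] with c hc
    exact le_mul_exp_neg_of_le_integral_negMulLog hK hc ht.1 (fun s hs ↦ hv s (hsub hs)) hint_t
      fun s hs ↦ hle s (hsub hs)
  have hlim : Tendsto (fun c ↦ K * ((t - a) * exp (-(c * exp (-(K * (t - a))))))) atTop (𝓝 0) := by
    simpa using ((tendsto_exp_neg_atTop_nhds_zero.comp
      (tendsto_id.atTop_mul_const (exp_pos (-(K * (t - a)))))).const_mul (t - a)).const_mul K
  exact (ge_of_tendsto hlim hbound).antisymm (hv t ht)

theorem log_gronwall_zero (T K : ℝ) (hT : 0 < T) (hK : 0 < K)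
    (v : ℝ → ℝ) (hv_meas : Measurable v)
    (hv_mem : ∀ t ∈ Icc (0 : ℝ) T, v t ∈ Icc (0 : ℝ) (Real.exp (-2)))
    (hineq : ∀ t ∈ Icc (0 : ℝ) T,
      v t ≤ -K * ∫ s in (0 : ℝ)..t, v s * Real.log (v s)) :
    ∀ t ∈ Icc (0 : ℝ) T, v t = 0 :=
  log_gronwall_zero_general hK.le (fun t ht ↦ (hv_mem t ht).1)
    (intervalIntegrable_comp_of_mem_isCompact continuous_negMulLog isCompact_Icc
      hv_meas.aestronglyMeasurable
      fun t ht ↦ hv_mem t (uIcc_of_le hT.le ▸ uIoc_subset_uIcc ht))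
    (by simpa [negMulLog] using hineq)
end

section
/- Let T > 0, K > 0, c ∈ (0, e^{−2}), and let v : [0, T] → ℝ be a measurable function with 0 ≤ v(t) ≤ e^{−2} for all t ∈ [0, T]. Suppose that for all t ∈ [0, T], v(t) ≤ c − K ∫_0^t v(s) ln v(s) ds, where the integrand s ↦ −v(s) ln v(s) is taken to be 0 whenever v(s) = 0. Then v(T) ≤ c^{exp(−K T)}, where c^{exp(−KT)} denotes the real power exp( exp(−KT) · ln c ). -/
open Set MeasureTheory

/-!
The curve `y t = c ^ exp (-K t)` solves `y' = K * negMulLog y` with `y 0 = c`. By concavity,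
`negMulLog` lies below its tangent at `y s`, and as long as `y ≤ e⁻¹` the slope of that tangent is
nonnegative and at most `-log c - 1`. So the positive part of `v - y` is dominated by a multiple of
its own integral, and the linear Grönwall inequality forces it to vanish. Once `y` exceeds `e⁻¹`
there is nothing to prove, since `v ≤ e⁻¹`.
-/

section

open Real Filter Topology

section IntegralGronwall

variable {u : ℝ → ℝ} {a b δ A : ℝ}

theorem le_mul_exp_of_le_add_mul_integral_of_continuousOn (hA : 0 ≤ A)
    (hu : ContinuousOn u (Icc a b))
    (h : ∀ t ∈ Icc a b, u t ≤ δ + A * ∫ s in a..t, u s) :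
    ∀ t ∈ Icc a b, u t ≤ δ * exp (A * (t - a)) := by
  intro t ht
  have hint : IntervalIntegrable u volume a b := hu.intervalIntegrable_of_Icc (ht.1.trans ht.2)
  have hcont : ContinuousOn (fun x => δ + A * ∫ s in a..x, u s) (Icc a b) :=
    continuousOn_const.add (continuousOn_const.mul
      ((intervalIntegral.continuousOn_primitive_interval' hint left_mem_uIcc).mono Icc_subset_uIcc))
  have hderiv : ∀ x ∈ Ico a b,
      HasDerivWithinAt (fun x => δ + A * ∫ s in a..x, u s) (A * u x) (Ici x) x := by
    intro x hx
    have hnhds : Icc a b ∈ 𝓝[>] x := Icc_mem_nhdsGT_of_mem hx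
    have hux : ContinuousWithinAt u (Ioi x) x :=
      (hu x (Ico_subset_Icc_self hx)).mono_of_mem_nhdsWithin hnhds
    have hmeas : StronglyMeasurableAtFilter u (𝓝[>] x) :=
      ⟨Icc a b, hnhds, hu.aestronglyMeasurable measurableSet_Icc⟩
    refine ((intervalIntegral.integral_hasDerivWithinAt_right ?_ hmeas hux).const_mul A).const_add δ
    exact hint.mono_set (uIcc_subset_uIcc_left (Icc_subset_uIcc (Ico_subset_Icc_self hx)))
  have hbound := le_gronwallBound_of_liminf_deriv_right_le hcont
    (fun x hx _ hr => (hderiv x hx).liminf_right_slope_le hr) (δ := δ) (K := A) (ε := 0) (by simp)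
    (fun x hx => by
      simpa using mul_le_mul_of_nonneg_left (h x (Ico_subset_Icc_self hx)) hA) t ht
  rw [gronwallBound_ε0] at hbound
  exact (h t ht).trans hbound

theorem le_mul_exp_of_le_add_mul_integral (hA : 0 ≤ A) (hu : IntervalIntegrable u volume a b)
    (h : ∀ t ∈ Icc a b, u t ≤ δ + A * ∫ s in a..t, u s) :
    ∀ t ∈ Icc a b, u t ≤ δ * exp (A * (t - a)) := by
  intro t ht
  -- The right-hand side of `h` is continuous, dominates `u`, and satisfies the same inequality.
  have hcont : ContinuousOn (fun x => δ + A * ∫ s in a..x, u s) (Icc a b) :=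
    continuousOn_const.add (continuousOn_const.mul
      ((intervalIntegral.continuousOn_primitive_interval' hu left_mem_uIcc).mono Icc_subset_uIcc))
  refine (h t ht).trans
    (le_mul_exp_of_le_add_mul_integral_of_continuousOn hA hcont (fun x hx => ?_) t ht)
  have hsub : Icc a x ⊆ Icc a b := Icc_subset_Icc_right hx.2
  gcongr
  refine intervalIntegral.integral_mono_on hx.1 ?_ ?_ fun s hs => h s (hsub hs)
  · exact hu.mono_set (uIcc_subset_uIcc_left (Icc_subset_uIcc hx))
  · exact (hcont.mono hsub).intervalIntegrable_of_Icc hx.1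

end IntegralGronwall

theorem le_of_le_add_integral_of_add_integral_le {F : ℝ → ℝ → ℝ} {v y : ℝ → ℝ} {a b c L : ℝ}
    (hL : 0 ≤ L)
    (hv : IntervalIntegrable v volume a b) (hy : IntervalIntegrable y volume a b)
    (hFv : IntervalIntegrable (fun s => F s (v s)) volume a b)
    (hFy : IntervalIntegrable (fun s => F s (y s)) volume a b)
    (hF : ∀ s ∈ Icc a b, F s (v s) - F s (y s) ≤ L * max (v s - y s) 0)
    (hsub : ∀ t ∈ Icc a b, v t ≤ c + ∫ s in a..t, F s (v s))
    (hsuper : ∀ t ∈ Icc a b, c + ∫ s in a..t, F s (y s) ≤ y t) :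
    ∀ t ∈ Icc a b, v t ≤ y t := by
  have hm : IntervalIntegrable (fun s => max (v s - y s) 0) volume a b :=
    ⟨(hv.sub hy).1.pos_part, (hv.sub hy).2.pos_part⟩
  have hm_le : ∀ t ∈ Icc a b, max (v t - y t) 0 ≤ 0 + L * ∫ s in a..t, max (v s - y s) 0 := by
    intro t ht
    have hmono : uIcc a t ⊆ uIcc a b := uIcc_subset_uIcc_left (Icc_subset_uIcc ht)
    have hdiff : v t - y t ≤ L * ∫ s in a..t, max (v s - y s) 0 := calc
      v t - y t ≤ (∫ s in a..t, F s (v s)) - ∫ s in a..t, F s (y s) := by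
        linarith [hsub t ht, hsuper t ht]
      _ = ∫ s in a..t, F s (v s) - F s (y s) :=
        (intervalIntegral.integral_sub (hFv.mono_set hmono) (hFy.mono_set hmono)).symm
      _ ≤ ∫ s in a..t, L * max (v s - y s) 0 :=
        intervalIntegral.integral_mono_on ht.1 ((hFv.sub hFy).mono_set hmono)
          ((hm.const_mul L).mono_set hmono) fun s hs => hF s ⟨hs.1, hs.2.trans ht.2⟩
      _ = L * ∫ s in a..t, max (v s - y s) 0 := intervalIntegral.integral_const_mul _ _
    have hnonneg : 0 ≤ ∫ s in a..t, max (v s - y s) 0 :=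
      intervalIntegral.integral_nonneg ht.1 fun _ _ => le_max_right _ _
    simpa only [zero_add] using max_le hdiff (mul_nonneg hL hnonneg)
  intro t ht
  have := le_mul_exp_of_le_add_mul_integral hL hm hm_le t ht
  rw [zero_mul] at this
  exact sub_nonpos.1 ((le_max_left _ _).trans this)

theorem intervalIntegrable_of_mem_Icc {μ : Measure ℝ} [IsLocallyFiniteMeasure μ] {u : ℝ → ℝ}
    {a b m M : ℝ} (hab : a ≤ b) (hu : AEMeasurable u (μ.restrict (Icc a b)))
    (h : ∀ t ∈ Icc a b, u t ∈ Icc m M) : IntervalIntegrable u μ a b := by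
  have : IsFiniteMeasure (μ.restrict (Icc a b)) :=
    isFiniteMeasure_restrict.2 measure_Icc_lt_top.ne
  have hint : IntegrableOn u (Icc a b) μ :=
    Integrable.of_mem_Icc m M hu (ae_restrict_of_forall_mem measurableSet_Icc h)
  exact IntegrableOn.intervalIntegrable (by rwa [uIcc_of_le hab])

theorem negMulLog_mem_Icc {x : ℝ} (hx : x ∈ Icc 0 1) : negMulLog x ∈ Icc 0 1 :=
  ⟨negMulLog_nonneg hx.1 hx.2, (negMulLog_le_one_sub_self hx.1).trans (sub_le_self 1 hx.1)⟩

theorem negMulLog_le_tangent {x y : ℝ} (hx : 0 ≤ x) (hy : 0 < y) :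
    negMulLog x ≤ negMulLog y + (-log y - 1) * (x - y) := calc
  negMulLog x = negMulLog (y * (x / y)) := by rw [mul_div_cancel₀ _ hy.ne']
  _ = x / y * negMulLog y + y * negMulLog (x / y) := negMulLog_mul y (x / y)
  _ ≤ x / y * negMulLog y + y * (1 - x / y) := by
    gcongr
    exact negMulLog_le_one_sub_self (by positivity)
  _ = negMulLog y + (-log y - 1) * (x - y) := by
    rw [negMulLog]
    field_simp
    ring

theorem negMulLog_sub_le_mul_max {c x y : ℝ} (hc : 0 < c) (hcy : c ≤ y) (hy : y ≤ exp (-1))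
    (hx : 0 ≤ x) : negMulLog x - negMulLog y ≤ (-log c - 1) * max (x - y) 0 := by
  have hy₀ : 0 < y := hc.trans_le hcy
  have hslope : 0 ≤ -log y - 1 := by linarith [(log_le_iff_le_exp hy₀).2 hy]
  calc
    negMulLog x - negMulLog y ≤ (-log y - 1) * (x - y) :=
      sub_le_iff_le_add'.2 (negMulLog_le_tangent hx hy₀)
    _ ≤ (-log y - 1) * max (x - y) 0 := by gcongr; exact le_max_left _ _
    _ ≤ (-log c - 1) * max (x - y) 0 := by gcongr

theorem hasDerivAt_rpow_exp_neg_mul {c : ℝ} (hc : 0 < c) (K t : ℝ) :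
    HasDerivAt (fun t => c ^ exp (-(K * t))) (K * negMulLog (c ^ exp (-(K * t)))) t := by
  have hexp : HasDerivAt (fun t => exp (-(K * t))) (exp (-(K * t)) * -(K * 1)) t :=
    ((hasDerivAt_id t).const_mul K).neg.exp
  refine (hexp.const_rpow hc).congr_deriv ?_
  rw [negMulLog, log_rpow hc]
  ring

theorem rpow_exp_neg_mul_eq_add_integral {c : ℝ} (hc : 0 < c) (K t : ℝ) :
    c ^ exp (-(K * t)) = c + ∫ s in (0 : ℝ)..t, K * negMulLog (c ^ exp (-(K * s))) := by
  have hcont : Continuous fun s => K * negMulLog (c ^ exp (-(K * s))) := by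
    fun_prop (disch := positivity)
  rw [intervalIntegral.integral_eq_sub_of_hasDerivAt
    (fun s _ => hasDerivAt_rpow_exp_neg_mul hc K s) (hcont.intervalIntegrable _ _)]
  simp

theorem le_rpow_exp_of_le_add_mul_integral_negMulLog {T K c : ℝ} {v : ℝ → ℝ}
    (hK : 0 ≤ K) (hc : 0 < c) (hv : IntervalIntegrable v volume 0 T)
    (hφv : IntervalIntegrable (fun s => negMulLog (v s)) volume 0 T)
    (hv_nonneg : ∀ t ∈ Icc 0 T, 0 ≤ v t)
    (h : ∀ t ∈ Icc 0 T, v t ≤ c + K * ∫ s in (0 : ℝ)..t, negMulLog (v s))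
    (hT : c ^ exp (-(K * T)) ≤ exp (-1)) :
    ∀ t ∈ Icc 0 T, v t ≤ c ^ exp (-(K * t)) := by
  have hc_lt : c < 1 := by
    by_contra! hc_ge
    have : exp (-1) < 1 := exp_lt_one_iff.2 (by norm_num)
    linarith [one_le_rpow hc_ge (exp_nonneg (-(K * T)))]
  have hcy : ∀ s ∈ Icc 0 T, c ≤ c ^ exp (-(K * s)) := fun s hs =>
    self_le_rpow_of_le_one hc.le hc_lt.le (exp_le_one_iff.2 (neg_nonpos.2 (mul_nonneg hK hs.1)))
  have hy : ∀ s ∈ Icc 0 T, c ^ exp (-(K * s)) ≤ exp (-1) := fun s hs => by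
    refine (rpow_le_rpow_of_exponent_ge hc hc_lt.le ?_).trans hT
    gcongr
    exact hs.2
  have hycont : Continuous fun s => c ^ exp (-(K * s)) := by fun_prop (disch := positivity)
  have hlip : ∀ s ∈ Icc 0 T, K * negMulLog (v s) - K * negMulLog (c ^ exp (-(K * s))) ≤
      K * (-log c - 1) * max (v s - c ^ exp (-(K * s))) 0 := fun s hs => by
    rw [← mul_sub, mul_assoc]
    gcongr
    exact negMulLog_sub_le_mul_max hc (hcy s hs) (hy s hs) (hv_nonneg s hs)
  intro t ht
  have hlog : 0 ≤ -log c - 1 := by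
    linarith [(log_le_iff_le_exp hc).2 ((hcy t ht).trans (hy t ht))]
  refine le_of_le_add_integral_of_add_integral_le (F := fun _ x => K * negMulLog x) (c := c)
    (mul_nonneg hK hlog) hv (hycont.intervalIntegrable _ _) (hφv.const_mul K)
    (Continuous.intervalIntegrable (by fun_prop) _ _) hlip (fun s hs => ?_)
    (fun s _ => (rpow_exp_neg_mul_eq_add_integral hc K s).ge) t ht
  rw [intervalIntegral.integral_const_mul]
  exact h s hs

theorem log_gronwall_quantitative_general {T K c : ℝ} (hK : 0 ≤ K) {v : ℝ → ℝ}
    (hv_meas : AEMeasurable v (volume.restrict (Icc 0 T)))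
    (hv_mem : ∀ t ∈ Icc 0 T, v t ∈ Icc 0 (exp (-1)))
    (hineq : ∀ t ∈ Icc 0 T, v t ≤ c + K * ∫ s in (0 : ℝ)..t, negMulLog (v s)) :
    ∀ t ∈ Icc 0 T, v t ≤ c ^ exp (-(K * t)) := by
  intro t ht
  have h0 : (0 : ℝ) ∈ Icc 0 T := ⟨le_rfl, ht.1.trans ht.2⟩
  have hc : 0 ≤ c := by simpa using (hv_mem 0 h0).1.trans (hineq 0 h0)
  have hsub : Icc 0 t ⊆ Icc 0 T := Icc_subset_Icc_right ht.2
  have hmeas : AEMeasurable v (volume.restrict (Icc 0 t)) := hv_meas.mono_set hsub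
  have hv : IntervalIntegrable v volume 0 t :=
    intervalIntegrable_of_mem_Icc ht.1 hmeas fun s hs => hv_mem s (hsub hs)
  have hφv : IntervalIntegrable (fun s => negMulLog (v s)) volume 0 t :=
    intervalIntegrable_of_mem_Icc ht.1
      (continuous_negMulLog.measurable.comp_aemeasurable hmeas)
      fun s hs => negMulLog_mem_Icc
        (Icc_subset_Icc_right (exp_le_one_iff.2 (by norm_num)) (hv_mem s (hsub hs)))
  -- Enlarging `c` makes it positive, so that the comparison curve solves the equation.
  suffices hlt : ∀ c' > c, v t ≤ c' ^ exp (-(K * t)) from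
    ge_of_tendsto (((continuous_rpow_const (exp_nonneg _)).tendsto c).mono_left nhdsWithin_le_nhds)
      (eventually_mem_nhdsWithin.mono hlt : ∀ᶠ c' in 𝓝[>] c, _)
  intro c' hcc'
  rcases le_total (exp (-1)) (c' ^ exp (-(K * t))) with hlarge | hsmall
  · exact (hv_mem t ht).2.trans hlarge
  · exact le_rpow_exp_of_le_add_mul_integral_negMulLog hK (hc.trans_lt hcc') hv hφv
      (fun s hs => (hv_mem s (hsub hs)).1)
      (fun s hs => (hineq s (hsub hs)).trans (by gcongr)) hsmall t ⟨ht.1, le_rfl⟩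

end

theorem log_gronwall_quantitative (T K c : ℝ) (hT : 0 < T) (hK : 0 < K)
    (hc : c ∈ Ioo (0 : ℝ) (Real.exp (-2)))
    (v : ℝ → ℝ) (hv_meas : Measurable v)
    (hv_mem : ∀ t ∈ Icc (0 : ℝ) T, v t ∈ Icc (0 : ℝ) (Real.exp (-2)))
    (hineq : ∀ t ∈ Icc (0 : ℝ) T,
      v t ≤ c - K * ∫ s in (0 : ℝ)..t, v s * Real.log (v s)) :
    v T ≤ c ^ Real.exp (-(K * T)) :=
  log_gronwall_quantitative_general hK.le hv_meas.aemeasurable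
    (fun t ht => Icc_subset_Icc_right (Real.exp_le_exp.2 (by norm_num)) (hv_mem t ht))
    (by simpa [Real.negMulLog, sub_eq_add_neg] using hineq) T ⟨hT.le, le_rfl⟩
end
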